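/- arXiv:2307.04313 — 2 statements merged into one kernel-verified Lean document; each statement's English description precedes it below -/
import Mathlib

section
/- Let F denote the Fibonacci sequence with F_1 = F_2 = 1, and let h : ℤ × ℤ → ℤ × ℤ be the map h(m,n) = (m−n, 2n−m). For coprime integers m > n ≥ 1, there exists a natural number i such that the i-th iterate of h applied to (m,n) equals (1,1) or (2,1) if and only if there exists an integer j ≥ 1 with (m,n) = (F_{j+1}, F_j). -/
theorem fwd_aux (i : ℕ) : ∀ m n : ℤ,
    ((fun p : ℤ × ℤ => (p.1 - p.2, 2 * p.2 - p.1))^[i] (m, n) = (1, 1) ∨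
        (fun p : ℤ × ℤ => (p.1 - p.2, 2 * p.2 - p.1))^[i] (m, n) = (2, 1)) →
      ∃ j : ℕ, 1 ≤ j ∧ m = (Nat.fib (j + 1) : ℤ) ∧ n = (Nat.fib j : ℤ) := by
  induction i with
  | zero =>
    intro m n h
    simp only [Function.iterate_zero, id, Prod.mk.injEq] at h
    rcases h with ⟨rfl, rfl⟩ | ⟨rfl, rfl⟩
    · exact ⟨1, le_refl _, by simp, by simp⟩
    · exact ⟨2, by norm_num, by norm_num [Nat.fib_add_two], by simp⟩
  | succ i ih =>
    intro m n h
    simp only [Function.iterate_succ_apply] at h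
    obtain ⟨j, hj, h1, h2⟩ := ih _ _ h
    have e1 : Nat.fib (j + 2) = Nat.fib j + Nat.fib (j + 1) := Nat.fib_add_two
    have e2 : Nat.fib (j + 2 + 1) = Nat.fib (j + 1) + Nat.fib (j + 2) := Nat.fib_add_two
    exact ⟨j + 2, by omega, by omega, by omega⟩

theorem bwd_aux (j : ℕ) : ∃ i : ℕ,
    ((fun p : ℤ × ℤ => (p.1 - p.2, 2 * p.2 - p.1))^[i]
        ((Nat.fib (j + 2) : ℤ), (Nat.fib (j + 1) : ℤ)) = (1, 1) ∨
      (fun p : ℤ × ℤ => (p.1 - p.2, 2 * p.2 - p.1))^[i]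
        ((Nat.fib (j + 2) : ℤ), (Nat.fib (j + 1) : ℤ)) = (2, 1)) := by
  induction j using Nat.twoStepInduction with
  | zero => exact ⟨0, by simp⟩
  | one => exact ⟨0, by norm_num [Nat.fib_add_two]⟩
  | more j ih _ =>
    obtain ⟨i, hi⟩ := ih
    refine ⟨i + 1, ?_⟩
    have e1 : Nat.fib (j + 2 + 1) = Nat.fib (j + 1) + Nat.fib (j + 2) := Nat.fib_add_two
    have e2 : Nat.fib (j + 2 + 2) = Nat.fib (j + 2) + Nat.fib (j + 2 + 1) := Nat.fib_add_two
    have a1 : (Nat.fib (j + 2 + 2) : ℤ) - Nat.fib (j + 2 + 1) = Nat.fib (j + 2) := by omega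
    have a2 : 2 * (Nat.fib (j + 2 + 1) : ℤ) - Nat.fib (j + 2 + 2) = Nat.fib (j + 1) := by omega
    simp only [Function.iterate_succ_apply, a1, a2]
    exact hi

/-- For coprime integers `m > n ≥ 1`, some iterate of `h(m,n) = (m-n, 2n-m)`
reaches `(1,1)` or `(2,1)` iff `(m,n)` is a Fibonacci pair `(F (j+1), F j)`, `j ≥ 1`. -/
theorem stmt_5 (m n : ℤ) (hmn : m > n) (hn : n ≥ 1) (hcop : IsCoprime m n) :
    (∃ i : ℕ,
        (fun p : ℤ × ℤ => (p.1 - p.2, 2 * p.2 - p.1))^[i] (m, n) = (1, 1) ∨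
        (fun p : ℤ × ℤ => (p.1 - p.2, 2 * p.2 - p.1))^[i] (m, n) = (2, 1)) ↔
      ∃ j : ℕ, 1 ≤ j ∧ (m, n) = ((Nat.fib (j + 1) : ℤ), (Nat.fib j : ℤ)) := by
  constructor
  · rintro ⟨i, h⟩
    obtain ⟨j, hj, h1, h2⟩ := fwd_aux i m n h
    exact ⟨j, hj, Prod.ext h1 h2⟩
  · rintro ⟨j, hj, h⟩
    obtain ⟨k, rfl⟩ := Nat.exists_eq_add_of_le' hj
    rw [h]
    exact bwd_aux k
end

section
/- Let F denote the Fibonacci sequence with F_1 = F_2 = 1, and let h' : ℤ × ℤ → ℤ × ℤ be the map h'(m,n) = (2m−n, n−m). For coprime integers n > m ≥ 1, there exists a natural number i such that the i-th iterate of h' applied to (m,n) equals (1,1) or (1,2) if and only if there exists an integer j ≥ 1 with (m,n) = (F_j, F_{j+1}). -/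
theorem iter_fib_iff (k i : ℕ) : ∀ p : ℤ × ℤ,
    (fun p : ℤ × ℤ => (2 * p.1 - p.2, p.2 - p.1))^[i] p
        = ((Nat.fib k : ℤ), (Nat.fib (k + 1) : ℤ)) ↔
      p = ((Nat.fib (k + 2 * i) : ℤ), (Nat.fib (k + 2 * i + 1) : ℤ)) := by
  induction i with
  | zero => intro p; simp
  | succ i ih =>
    intro p
    rw [Function.iterate_succ_apply, ih]
    have h1 : Nat.fib (k + 2 * (i + 1)) = Nat.fib (k + 2 * i) + Nat.fib (k + 2 * i + 1) :=
      Nat.fib_add_two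
    have h2 : Nat.fib (k + 2 * (i + 1) + 1)
        = Nat.fib (k + 2 * i + 1) + Nat.fib (k + 2 * (i + 1)) :=
      Nat.fib_add_two
    obtain ⟨a, b⟩ := p
    simp only [Prod.mk.injEq]
    omega

/-- For coprime integers `n > m ≥ 1`, some iterate of `h'(m,n) = (2m-n, n-m)`
reaches `(1,1)` or `(1,2)` iff `(m,n)` is a Fibonacci pair `(F j, F (j+1))`, `j ≥ 1`. -/
theorem stmt_6 (m n : ℤ) (hnm : n > m) (hm : m ≥ 1) (hcop : IsCoprime m n) :
    (∃ i : ℕ,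
        (fun p : ℤ × ℤ => (2 * p.1 - p.2, p.2 - p.1))^[i] (m, n) = (1, 1) ∨
        (fun p : ℤ × ℤ => (2 * p.1 - p.2, p.2 - p.1))^[i] (m, n) = (1, 2)) ↔
      ∃ j : ℕ, 1 ≤ j ∧ (m, n) = ((Nat.fib j : ℤ), (Nat.fib (j + 1) : ℤ)) := by
  have e1 : ((1 : ℤ), (1 : ℤ)) = ((Nat.fib 1 : ℤ), (Nat.fib (1 + 1) : ℤ)) := by simp
  have e2 : ((1 : ℤ), (2 : ℤ)) = ((Nat.fib 2 : ℤ), (Nat.fib (2 + 1) : ℤ)) := by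
    norm_num [Nat.fib_add_two]
  rw [e1, e2]
  simp only [iter_fib_iff]
  constructor
  · rintro ⟨i, h | h⟩
    · exact ⟨1 + 2 * i, by omega, h⟩
    · exact ⟨2 + 2 * i, by omega, h⟩
  · rintro ⟨j, hj, h⟩
    refine ⟨(j - 1) / 2, ?_⟩
    have : 1 + 2 * ((j - 1) / 2) = j ∨ 2 + 2 * ((j - 1) / 2) = j := by omega
    rcases this with h' | h'
    · left; rw [h']; exact h
    · right; rw [h']; exact h
end
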